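/- arXiv:1307.0887 — 2 statements merged into one kernel-verified Lean document; each statement's English description precedes it below -/
import Mathlib

section
/- Let k be a field of characteristic 0, K an algebraically closed complete valued field containing k, and f ∈ K(z) a rational function of degree d > 1. Suppose w is a fixed point of f^p with multiplicity μ := [f^p = Id]({w}) > 1 (i.e., in the local power series expansion f^p(z) = w + (z − w) + C(z − w)^μ + ⋯ with C ≠ 0). Then for every n ∈ ℕ such that w is a periodic point counted in [f^n = Id], the multiplicity of w as a root of f^n(z) − z is at most μ. -/
/-!
Write `f^n = Bₙ / Aₙ` in the affine coordinate `z = X₁ / X₀`, so that `Dₙ = Bₙ - z Aₙ` is `fixPoly F n`.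
Homogeneity of the iterates and a first-order Taylor expansion of `F^a (A_b, z A_b + D_b)` give
the congruence `dvd_fixPoly_add`,
`A_b D_{a+b} ≡ A_b^(e+1) D_a + A_b^e D_b (D_a' + A_a)` modulo `D_b²`, where `e = d^a`.
Non-degeneracy of `F` makes `A_b` nonzero at `w` as soon as `D_b` vanishes there, so `A_b` can be
cancelled modulo powers of `z - w`.

Two consequences finish the proof. First, if `D_b` and `D_{a+b}` are divisible by `(z - w)²`, then so
is `D_a`; by Euclidean division every `n` with `D_n` divisible by `(z - w)²` is a multiple of the
smallest positive such index, which is `p`. Secondly, if `C` is the leading coefficient of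
`D_p / A_p` at `w`, then that of `D_{pm} / A_{pm}` in the same degree `μ` is `m C`
(`fixPoly_mul_leading`), which is nonzero in characteristic zero. Hence the multiplicity is
exactly `μ` at each positive multiple of `p` and at most `1` at all other positive integers.
-/


open MvPolynomial Classical

noncomputable section

/-- Composition of two pairs of bivariate polynomials (i.e. of two homogeneous self-maps
of the affine plane). -/
def comp2 {K : Type*} [CommRing K]
    (F G : MvPolynomial (Fin 2) K × MvPolynomial (Fin 2) K) :
    MvPolynomial (Fin 2) K × MvPolynomial (Fin 2) K :=
  (bind₁ ![G.1, G.2] F.1, bind₁ ![G.1, G.2] F.2)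

/-- The `n`-th iterate `F^n` of a pair `F` (a lift of a rational map). -/
def iterPair {K : Type*} [CommRing K]
    (F : MvPolynomial (Fin 2) K × MvPolynomial (Fin 2) K) :
    ℕ → MvPolynomial (Fin 2) K × MvPolynomial (Fin 2) K
  | 0 => (X 0, X 1)
  | n + 1 => comp2 F (iterPair F n)

/-- The polynomial `F₁ⁿ(1,z) − z·F₀ⁿ(1,z)` whose roots (with multiplicity) are the finite
fixed points of `fⁿ`, i.e. the divisor `[fⁿ = Id]` away from `∞`. -/
def fixPoly {K : Type*} [CommRing K]
    (F : MvPolynomial (Fin 2) K × MvPolynomial (Fin 2) K) (n : ℕ) : Polynomial K :=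
  MvPolynomial.eval₂ Polynomial.C (fun i => if i = 0 then 1 else Polynomial.X)
      (iterPair F n).2
    - Polynomial.X *
      MvPolynomial.eval₂ Polynomial.C (fun i => if i = 0 then 1 else Polynomial.X)
        (iterPair F n).1

/-! ### Iterates in the affine coordinate -/

/-- The denominator `F₀ⁿ(1, z)` of `fⁿ` in the affine coordinate. -/
def affDen {K : Type*} [CommRing K]
    (F : MvPolynomial (Fin 2) K × MvPolynomial (Fin 2) K) (n : ℕ) : Polynomial K :=
  aeval ![1, Polynomial.X] (iterPair F n).1

/-- The numerator `F₁ⁿ(1, z)` of `fⁿ` in the affine coordinate. -/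
def affNum {K : Type*} [CommRing K]
    (F : MvPolynomial (Fin 2) K × MvPolynomial (Fin 2) K) (n : ℕ) : Polynomial K :=
  aeval ![1, Polynomial.X] (iterPair F n).2

section Ring

variable {K : Type*} [CommRing K] (F : MvPolynomial (Fin 2) K × MvPolynomial (Fin 2) K)

lemma fixPoly_eq (n : ℕ) : fixPoly F n = affNum F n - Polynomial.X * affDen F n := by
  have h : (fun i : Fin 2 => if i = 0 then (1 : Polynomial K) else Polynomial.X)
      = ![1, Polynomial.X] := by
    funext i; fin_cases i <;> simp
  unfold fixPoly affNum affDen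
  rw [h]
  rfl

lemma fixPoly_zero : fixPoly F 0 = 0 := by
  simp [fixPoly_eq, affNum, affDen, iterPair]

lemma iterPair_add (a b : ℕ) :
    iterPair F (a + b) = comp2 (iterPair F a) (iterPair F b) := by
  induction a with
  | zero => simp [iterPair, comp2]
  | succ a ih =>
    have h : (fun i => bind₁ ![(iterPair F b).1, (iterPair F b).2]
        (![(iterPair F a).1, (iterPair F a).2] i)) =
        ![bind₁ ![(iterPair F b).1, (iterPair F b).2] (iterPair F a).1,
          bind₁ ![(iterPair F b).1, (iterPair F b).2] (iterPair F a).2] := by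
      funext i; fin_cases i <;> rfl
    rw [Nat.succ_add a b]
    simp only [iterPair, ih, comp2, bind₁_bind₁, h]

lemma iterPair_isHomogeneous {d : ℕ} (h1 : F.1.IsHomogeneous d) (h2 : F.2.IsHomogeneous d)
    (n : ℕ) : (iterPair F n).1.IsHomogeneous (d ^ n) ∧ (iterPair F n).2.IsHomogeneous (d ^ n) := by
  induction n with
  | zero => simpa [iterPair] using ⟨isHomogeneous_X K 0, isHomogeneous_X K 1⟩
  | succ n ih =>
    have h : ∀ i, (![(iterPair F n).1, (iterPair F n).2] i).IsHomogeneous (d ^ n) := by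
      intro i; fin_cases i
      exacts [ih.1, ih.2]
    rw [pow_succ]
    exact ⟨h1.aeval _ h, h2.aeval _ h⟩

/-! ### First-order expansion of a composition -/

/-- The first-order Taylor expansion of a binary form along the line through `(A, z A)`,
multiplied by `A` so that no exponent is negative. -/
lemma dvd_aeval_sub {e : ℕ} {H : MvPolynomial (Fin 2) K} (hH : H.IsHomogeneous e)
    (A D : Polynomial K) :
    D ^ 2 ∣ A * aeval ![A, Polynomial.X * A + D] H
      - (A ^ (e + 1) * aeval ![1, Polynomial.X] H
        + A ^ e * D * Polynomial.derivative (aeval ![(1 : Polynomial K), Polynomial.X] H)) := by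
  have key : ∀ i j : ℕ, i + j = e → ∀ c : K,
      D ^ 2 ∣ A * (Polynomial.C c * (A ^ i * (Polynomial.X * A + D) ^ j))
        - (A ^ (e + 1) * (Polynomial.C c * Polynomial.X ^ j)
          + A ^ e * D * (Polynomial.C c * ((j : Polynomial K) * Polynomial.X ^ (j - 1)))) := by
    rintro i j rfl c
    obtain ⟨u, hu⟩ := Polynomial.powAddExpansion (Polynomial.X * A) D j
    rw [hu]
    refine ⟨A * Polynomial.C c * A ^ i * u, ?_⟩
    rcases j with _ | j
    · simp only [Nat.cast_zero, pow_zero]; ring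
    · simp only [Nat.add_sub_cancel]; ring
  have hsum : ∀ v : Fin 2 → Polynomial K, aeval v H
      = ∑ s ∈ H.support, Polynomial.C (H.coeff s) * (v 0 ^ s 0 * v 1 ^ s 1) := by
    intro v
    rw [aeval_def, eval₂_eq']
    simp [Fin.prod_univ_two]
  rw [hsum, hsum, Polynomial.derivative_sum, Finset.mul_sum, Finset.mul_sum, Finset.mul_sum,
    ← Finset.sum_add_distrib, ← Finset.sum_sub_distrib]
  refine Finset.dvd_sum fun s hs => ?_
  have hs' : s 0 + s 1 = e := by
    have := hH (mem_support_iff.mp hs)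
    rw [Finsupp.weight_apply, Finsupp.sum_fintype _ _ (by simp)] at this
    simpa [Fin.sum_univ_two] using this
  have hk := key _ _ hs' (H.coeff s)
  simp only [Matrix.cons_val_zero, Matrix.cons_val_one, one_pow, one_mul,
    Polynomial.derivative_C_mul, Polynomial.derivative_X_pow, map_natCast]
  exact hk

lemma aeval_comp (G : MvPolynomial (Fin 2) K × MvPolynomial (Fin 2) K)
    (H : MvPolynomial (Fin 2) K) (v : Fin 2 → Polynomial K) :
    aeval v (bind₁ ![G.1, G.2] H) = aeval ![aeval v G.1, aeval v G.2] H := by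
  rw [aeval_bind₁]
  congr 2
  funext i; fin_cases i <;> rfl

variable {F} {d : ℕ}

lemma dvd_affDen_add (h1 : F.1.IsHomogeneous d) (h2 : F.2.IsHomogeneous d) (a b : ℕ) :
    fixPoly F b ^ 2 ∣ affDen F b * affDen F (a + b)
      - (affDen F b ^ (d ^ a + 1) * affDen F a
        + affDen F b ^ (d ^ a) * fixPoly F b * Polynomial.derivative (affDen F a)) := by
  have h := dvd_aeval_sub (iterPair_isHomogeneous F h1 h2 a).1 (affDen F b) (fixPoly F b)
  have hb : Polynomial.X * affDen F b + fixPoly F b = affNum F b := by rw [fixPoly_eq]; ring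
  have hc : affDen F (a + b) = aeval ![affDen F b, affNum F b] (iterPair F a).1 := by
    rw [affDen, iterPair_add]; exact aeval_comp _ _ _
  rwa [hb, ← hc] at h

lemma dvd_affNum_add (h1 : F.1.IsHomogeneous d) (h2 : F.2.IsHomogeneous d) (a b : ℕ) :
    fixPoly F b ^ 2 ∣ affDen F b * affNum F (a + b)
      - (affDen F b ^ (d ^ a + 1) * affNum F a
        + affDen F b ^ (d ^ a) * fixPoly F b * Polynomial.derivative (affNum F a)) := by
  have h := dvd_aeval_sub (iterPair_isHomogeneous F h1 h2 a).2 (affDen F b) (fixPoly F b)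
  have hb : Polynomial.X * affDen F b + fixPoly F b = affNum F b := by rw [fixPoly_eq]; ring
  have hc : affNum F (a + b) = aeval ![affDen F b, affNum F b] (iterPair F a).2 := by
    rw [affNum, iterPair_add]; exact aeval_comp _ _ _
  rwa [hb, ← hc] at h

/-- The effect of composition on `fⁿ(z) - z`, to first order in `f^b(z) - z`. -/
lemma dvd_fixPoly_add (h1 : F.1.IsHomogeneous d) (h2 : F.2.IsHomogeneous d) (a b : ℕ) :
    fixPoly F b ^ 2 ∣ affDen F b * fixPoly F (a + b)
      - (affDen F b ^ (d ^ a + 1) * fixPoly F a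
        + affDen F b ^ (d ^ a) * fixPoly F b
          * (Polynomial.derivative (fixPoly F a) + affDen F a)) := by
  have h := dvd_sub (dvd_affNum_add h1 h2 a b)
    ((dvd_affDen_add h1 h2 a b).mul_left Polynomial.X)
  have hder : Polynomial.derivative (fixPoly F a) = Polynomial.derivative (affNum F a)
      - (affDen F a + Polynomial.X * Polynomial.derivative (affDen F a)) := by
    rw [fixPoly_eq]; simp
  rw [hder, fixPoly_eq F (a + b), fixPoly_eq F a]
  convert h using 1
  ring

end Ring

/-! ### Non-degeneracy -/

section Field

variable {K : Type*} [Field K] {F : MvPolynomial (Fin 2) K × MvPolynomial (Fin 2) K} {d : ℕ} {w : K}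

/-- The iterates of a non-degenerate lift are non-degenerate. -/
lemma iterPair_nondegenerate
    (hnd : ∀ x : K × K, x ≠ 0 →
      ¬(MvPolynomial.eval ![x.1, x.2] F.1 = 0 ∧ MvPolynomial.eval ![x.1, x.2] F.2 = 0))
    (n : ℕ) (x : K × K) (hx : x ≠ 0) :
    ¬(MvPolynomial.eval ![x.1, x.2] (iterPair F n).1 = 0
      ∧ MvPolynomial.eval ![x.1, x.2] (iterPair F n).2 = 0) := by
  induction n with
  | zero =>
    simpa [iterPair, Prod.ext_iff] using hx
  | succ n ih =>
    have h : ∀ H : MvPolynomial (Fin 2) K,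
        eval ![x.1, x.2] (bind₁ ![(iterPair F n).1, (iterPair F n).2] H)
        = eval ![eval ![x.1, x.2] (iterPair F n).1, eval ![x.1, x.2] (iterPair F n).2] H := by
      intro H
      rw [← MvPolynomial.coe_aeval_eq_eval, ← MvPolynomial.coe_aeval_eq_eval]
      simp only [RingHom.coe_coe]
      rw [aeval_bind₁]
      congr 2
      funext i; fin_cases i <;> rfl
    have := hnd (eval ![x.1, x.2] (iterPair F n).1, eval ![x.1, x.2] (iterPair F n).2)
      (by simpa [Prod.ext_iff] using ih)
    simpa only [iterPair, comp2, h] using this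

lemma eval_aeval_chart (H : MvPolynomial (Fin 2) K) :
    (aeval ![(1 : Polynomial K), Polynomial.X] H).eval w = eval ![1, w] H := by
  rw [← Polynomial.coe_evalRingHom, aeval_def, hom_eval₂]
  change _ = eval₂ (RingHom.id K) ![1, w] H
  congr 1
  · ext; simp
  · funext i; fin_cases i <;> simp

/-- If `fⁿ` fixes the finite point `w`, then `w` is not a pole of `fⁿ`. -/
lemma eval_affDen_ne_zero
    (hnd : ∀ x : K × K, x ≠ 0 →
      ¬(MvPolynomial.eval ![x.1, x.2] F.1 = 0 ∧ MvPolynomial.eval ![x.1, x.2] F.2 = 0))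
    {n : ℕ} (hn : (Polynomial.X - Polynomial.C w) ∣ fixPoly F n) : (affDen F n).eval w ≠ 0 := by
  intro h0
  have hn' : (affNum F n).eval w = 0 := by
    have := Polynomial.dvd_iff_isRoot.mp hn
    rw [Polynomial.IsRoot, fixPoly_eq] at this
    simpa [h0] using this
  refine iterPair_nondegenerate hnd n (1, w) (by simp) ⟨?_, ?_⟩
  · rw [← h0, affDen, eval_aeval_chart]
  · rw [← hn', affNum, eval_aeval_chart]

lemma pow_dvd_of_dvd_mul {P Q : Polynomial K} (hP : P.eval w ≠ 0) {N : ℕ}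
    (h : (Polynomial.X - Polynomial.C w) ^ N ∣ P * Q) : (Polynomial.X - Polynomial.C w) ^ N ∣ Q :=
  (Polynomial.prime_X_sub_C w).pow_dvd_of_dvd_mul_left N
    (fun hd => hP (Polynomial.dvd_iff_isRoot.mp hd)) h

/-! ### Multiplicities of iterates at a fixed point -/

/-- If `f^b` is the identity at `w` to order `N`, and so is `f^a`, then so is `f^(a+b)`. -/
lemma pow_dvd_fixPoly_add
    (h1 : F.1.IsHomogeneous d) (h2 : F.2.IsHomogeneous d)
    (hnd : ∀ x : K × K, x ≠ 0 →
      ¬(MvPolynomial.eval ![x.1, x.2] F.1 = 0 ∧ MvPolynomial.eval ![x.1, x.2] F.2 = 0))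
    {N a b : ℕ} (hN : 1 ≤ N)
    (ha : (Polynomial.X - Polynomial.C w) ^ N ∣ fixPoly F a)
    (hb : (Polynomial.X - Polynomial.C w) ^ N ∣ fixPoly F b) :
    (Polynomial.X - Polynomial.C w) ^ N ∣ fixPoly F (a + b) := by
  have hA := eval_affDen_ne_zero hnd (dvd_trans (dvd_pow_self _ (by omega)) hb)
  refine pow_dvd_of_dvd_mul hA ?_
  have h := (hb.trans (dvd_pow_self _ two_ne_zero)).trans (dvd_fixPoly_add h1 h2 a b)
  exact (dvd_iff_dvd_of_dvd_sub h).mpr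
    (dvd_add (ha.mul_left _) ((hb.mul_left _).mul_right _))

lemma pow_dvd_fixPoly_mul
    (h1 : F.1.IsHomogeneous d) (h2 : F.2.IsHomogeneous d)
    (hnd : ∀ x : K × K, x ≠ 0 →
      ¬(MvPolynomial.eval ![x.1, x.2] F.1 = 0 ∧ MvPolynomial.eval ![x.1, x.2] F.2 = 0))
    {N p : ℕ} (hN : 1 ≤ N)
    (hp : (Polynomial.X - Polynomial.C w) ^ N ∣ fixPoly F p) (m : ℕ) :
    (Polynomial.X - Polynomial.C w) ^ N ∣ fixPoly F (p * m) := by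
  induction m with
  | zero => simp [fixPoly_zero]
  | succ m ih => exact pow_dvd_fixPoly_add h1 h2 hnd hN ih hp

/-- Right cancellation: if `f^b` and `f^a ∘ f^b` are the identity at `w` to order two, so is
`f^a`. -/
lemma sq_dvd_fixPoly_of_add
    (h1 : F.1.IsHomogeneous d) (h2 : F.2.IsHomogeneous d)
    (hnd : ∀ x : K × K, x ≠ 0 →
      ¬(MvPolynomial.eval ![x.1, x.2] F.1 = 0 ∧ MvPolynomial.eval ![x.1, x.2] F.2 = 0))
    {a b : ℕ}
    (hb : (Polynomial.X - Polynomial.C w) ^ 2 ∣ fixPoly F b)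
    (hab : (Polynomial.X - Polynomial.C w) ^ 2 ∣ fixPoly F (a + b)) :
    (Polynomial.X - Polynomial.C w) ^ 2 ∣ fixPoly F a := by
  have hA := eval_affDen_ne_zero hnd (dvd_trans (dvd_pow_self _ two_ne_zero) hb)
  have h := (hb.trans (dvd_pow_self _ two_ne_zero)).trans (dvd_fixPoly_add h1 h2 a b)
  have h' := (dvd_iff_dvd_of_dvd_sub h).mp (hab.mul_left _)
  have h'' := (dvd_add_left ((hb.mul_left _).mul_right _)).mp h'
  refine pow_dvd_of_dvd_mul (P := affDen F b ^ (d ^ a + 1)) ?_ h''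
  rw [Polynomial.eval_pow]
  exact pow_ne_zero _ hA

/-- If `r` is the least positive index at which `w` has multiplicity at least two (or the
iterate is the identity), then every other such index is a multiple of `r`. -/
lemma dvd_of_sq_dvd_fixPoly
    (h1 : F.1.IsHomogeneous d) (h2 : F.2.IsHomogeneous d)
    (hnd : ∀ x : K × K, x ≠ 0 →
      ¬(MvPolynomial.eval ![x.1, x.2] F.1 = 0 ∧ MvPolynomial.eval ![x.1, x.2] F.2 = 0))
    {r n : ℕ} (hr : 1 ≤ r)
    (hrd : (Polynomial.X - Polynomial.C w) ^ 2 ∣ fixPoly F r)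
    (hmin : ∀ m, 1 ≤ m → m < r → ¬ (Polynomial.X - Polynomial.C w) ^ 2 ∣ fixPoly F m)
    (hn : (Polynomial.X - Polynomial.C w) ^ 2 ∣ fixPoly F n) : r ∣ n := by
  have h := sq_dvd_fixPoly_of_add (a := n % r) (b := r * (n / r)) h1 h2 hnd
    (pow_dvd_fixPoly_mul h1 h2 hnd one_le_two hrd _) (by rwa [Nat.mod_add_div])
  by_contra hne
  exact hmin _ (Nat.pos_of_ne_zero fun h0 => hne (Nat.dvd_of_mod_eq_zero h0))
    (Nat.mod_lt _ (by omega)) h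

/-- The cocycle relation for denominators at a fixed point `w` of `f^b`. -/
lemma eval_affDen_add
    (h1 : F.1.IsHomogeneous d) (h2 : F.2.IsHomogeneous d)
    (hnd : ∀ x : K × K, x ≠ 0 →
      ¬(MvPolynomial.eval ![x.1, x.2] F.1 = 0 ∧ MvPolynomial.eval ![x.1, x.2] F.2 = 0))
    {a b : ℕ} (hb : (Polynomial.X - Polynomial.C w) ∣ fixPoly F b) :
    (affDen F (a + b)).eval w = (affDen F b).eval w ^ (d ^ a) * (affDen F a).eval w := by
  have hA := eval_affDen_ne_zero hnd hb
  obtain ⟨u, hu⟩ := dvd_affDen_add h1 h2 a b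
  have h0 : (fixPoly F b).eval w = 0 := Polynomial.dvd_iff_isRoot.mp hb
  have h := congrArg (Polynomial.eval w) hu
  simp only [Polynomial.eval_sub, Polynomial.eval_add, Polynomial.eval_mul, Polynomial.eval_pow,
    h0] at h
  apply mul_left_cancel₀ hA
  linear_combination h

/-- The coefficient of `(z - w)^μ` in `f^p(z) - z` is multiplied by `m` on passing to
`f^(pm)(z) - z`; the factors `affDen` clear the denominators of these two functions. -/
lemma fixPoly_mul_leading
    (h1 : F.1.IsHomogeneous d) (h2 : F.2.IsHomogeneous d)
    (hnd : ∀ x : K × K, x ≠ 0 →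
      ¬(MvPolynomial.eval ![x.1, x.2] F.1 = 0 ∧ MvPolynomial.eval ![x.1, x.2] F.2 = 0))
    {p μ : ℕ} (hμ : 2 ≤ μ) {c : Polynomial K}
    (hc : fixPoly F p = (Polynomial.X - Polynomial.C w) ^ μ * c) (m : ℕ) :
    ∃ c' : Polynomial K, fixPoly F (p * m) = (Polynomial.X - Polynomial.C w) ^ μ * c' ∧
      c'.eval w * (affDen F p).eval w = m * c.eval w * (affDen F (p * m)).eval w := by
  have hpd : (Polynomial.X - Polynomial.C w) ^ μ ∣ fixPoly F p := ⟨c, hc⟩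
  have hp1 : (Polynomial.X - Polynomial.C w) ∣ fixPoly F p :=
    (dvd_pow_self _ (by omega)).trans hpd
  have hT : (Polynomial.X - Polynomial.C w) ^ μ ≠ 0 := pow_ne_zero _ (Polynomial.X_sub_C_ne_zero w)
  induction m with
  | zero => exact ⟨0, by simp [fixPoly_zero]⟩
  | succ m ih =>
    obtain ⟨c₁, hc₁, he₁⟩ := ih
    obtain ⟨c', hc'⟩ := pow_dvd_fixPoly_mul h1 h2 hnd (by omega) hpd (m + 1)
    refine ⟨c', hc', ?_⟩
    obtain ⟨u, hu⟩ := dvd_fixPoly_add h1 h2 (p * m) p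
    -- since `μ ≥ 2`, the multiplier of `f^(pm)` at `w` is `1`
    have hder : (Polynomial.derivative (fixPoly F (p * m))).eval w = 0 := by
      refine Polynomial.dvd_iff_isRoot.mp (dvd_trans (dvd_pow_self _ ?_)
        (Polynomial.pow_sub_one_dvd_derivative_of_pow_dvd ⟨c₁, hc₁⟩))
      omega
    have hA := eval_affDen_add (a := p * m) h1 h2 hnd hp1
    rw [Nat.mul_succ] at hc' ⊢
    set E := Polynomial.derivative (fixPoly F (p * m)) + affDen F (p * m) with hE
    rw [hc', hc₁, hc] at hu
    have hq : affDen F p * c' = affDen F p ^ (d ^ (p * m) + 1) * c₁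
        + affDen F p ^ (d ^ (p * m)) * c * E + (Polynomial.X - Polynomial.C w) ^ μ * c ^ 2 * u := by
      apply mul_left_cancel₀ hT
      linear_combination hu
    have h := congrArg (Polynomial.eval w) hq
    have hμ0 : μ ≠ 0 := by omega
    simp only [hE, Polynomial.eval_add, Polynomial.eval_mul, Polynomial.eval_pow, hder,
      Polynomial.eval_sub, Polynomial.eval_X, Polynomial.eval_C, sub_self, zero_pow hμ0] at h
    rw [hA]
    push_cast
    linear_combination h + (affDen F p).eval w ^ (d ^ (p * m)) * he₁

end Field

/-- Let `k` have characteristic `0`, `K` an algebraically closed complete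
valued field containing `k`, and `f ∈ K(z)` of degree `d > 1` (given by a non-degenerate
homogeneous lift `F`).  If `w` is a fixed point of `f^p` of multiplicity `μ > 1` (as a root
of `f^p(z) − z`), with `p` minimal with this property, then for every `n ≥ 1` the
multiplicity of `w` as a root of `fⁿ(z) − z` is at most `μ`. -/
theorem stmt11 (k : Type*) [Field k] [CharZero k]
    (K : Type*) [NontriviallyNormedField K] [IsAlgClosed K] [CompleteSpace K]
    [Algebra k K]
    (F : MvPolynomial (Fin 2) K × MvPolynomial (Fin 2) K)
    (d : ℕ) (hd : 1 < d)
    (hhom1 : F.1.IsHomogeneous d) (hhom2 : F.2.IsHomogeneous d)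
    (hnd : ∀ x : K × K, x ≠ 0 →
      ¬(MvPolynomial.eval ![x.1, x.2] F.1 = 0 ∧ MvPolynomial.eval ![x.1, x.2] F.2 = 0))
    (w : K) (p : ℕ) (hp : 1 ≤ p)
    (μ : ℕ) (hμdef : μ = (fixPoly F p).rootMultiplicity w) (hμ : 1 < μ)
    (hpmin : ∀ m, 1 ≤ m → m < p → (fixPoly F m).rootMultiplicity w ≤ 1) :
    ∀ n, 1 ≤ n → (fixPoly F n).rootMultiplicity w ≤ μ := by
  have : CharZero K := charZero_of_injective_algebraMap (algebraMap k K).injective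
  have hp0 : fixPoly F p ≠ 0 := by
    intro h
    rw [h, Polynomial.rootMultiplicity_zero] at hμdef
    omega
  have hpd : (Polynomial.X - Polynomial.C w) ^ 2 ∣ fixPoly F p :=
    (Polynomial.le_rootMultiplicity_iff hp0).mp (by omega)
  -- An index `r < p` with `f^r = id` has multiplicity `0` by convention, so the least index with
  -- divisibility by `(z - w)²` still has to be identified with `p`.
  have hex : ∃ r, 1 ≤ r ∧ (Polynomial.X - Polynomial.C w) ^ 2 ∣ fixPoly F r := ⟨p, hp, hpd⟩
  obtain ⟨hr1, hrd⟩ := Nat.find_spec hex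
  have hrmin : ∀ m, 1 ≤ m → m < Nat.find hex →
      ¬ (Polynomial.X - Polynomial.C w) ^ 2 ∣ fixPoly F m :=
    fun m hm hlt hd => Nat.find_min hex hlt ⟨hm, hd⟩
  have hrle : Nat.find hex ≤ p := Nat.find_min' hex ⟨hp, hpd⟩
  generalize Nat.find hex = r at hr1 hrd hrmin hrle
  obtain ⟨s, hs⟩ := dvd_of_sq_dvd_fixPoly hhom1 hhom2 hnd hr1 hrd hrmin hpd
  have hr0 : fixPoly F r ≠ 0 := by
    intro h
    have := pow_dvd_fixPoly_mul (N := μ + 1) (w := w) hhom1 hhom2 hnd (by omega)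
      (by rw [h]; exact dvd_zero _) s
    rw [← hs] at this
    have := (Polynomial.le_rootMultiplicity_iff hp0).mpr this
    omega
  have hrp : r = p := by
    by_contra hne
    have := hpmin r hr1 (by omega)
    have := (Polynomial.le_rootMultiplicity_iff hr0).mpr hrd
    omega
  subst hrp
  intro n hn
  by_contra! hlt
  have hn0 : fixPoly F n ≠ 0 := by
    intro h
    rw [h, Polynomial.rootMultiplicity_zero] at hlt
    omega
  obtain ⟨m, rfl⟩ := dvd_of_sq_dvd_fixPoly hhom1 hhom2 hnd hr1 hrd hrmin
    ((Polynomial.le_rootMultiplicity_iff hn0).mp (by omega))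
  obtain ⟨c, hc, hcw⟩ := Polynomial.exists_eq_pow_rootMultiplicity_mul_and_not_dvd _ hp0 w
  rw [← hμdef] at hc
  obtain ⟨c', hc', he⟩ := fixPoly_mul_leading hhom1 hhom2 hnd hμ hc m
  have hT : (Polynomial.X - Polynomial.C w) ^ μ ≠ 0 := pow_ne_zero _ (Polynomial.X_sub_C_ne_zero w)
  have hd' := (Polynomial.le_rootMultiplicity_iff hn0).mp hlt
  have hc0 : c'.eval w = 0 := by
    rw [Nat.succ_eq_add_one, pow_succ, hc'] at hd'
    exact Polynomial.dvd_iff_isRoot.mp ((mul_dvd_mul_iff_left hT).mp hd')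
  have hA := eval_affDen_ne_zero (n := r * m) hnd
    ((dvd_pow_self _ (by omega)).trans (Dvd.intro _ hc'.symm))
  have hm : (m : K) ≠ 0 := by
    rw [Nat.cast_ne_zero]
    rintro rfl
    simp at hn
  have hcw' : c.eval w ≠ 0 := fun h => hcw (Polynomial.dvd_iff_isRoot.mpr h)
  rw [hc0, zero_mul] at he
  exact mul_ne_zero (mul_ne_zero hm hcw') hA he.symm

end
end

section
/- Let k be a product formula field, k_s its separable closure, g = {g_v} an adelic normalized weight, and Z a k-algebraic zeros divisor on ℙ¹(k_s). Then Σ_{v ∈ M_k} N_v ( (Z,Z)_{g_v} + 2 Σ_{w ∈ supp Z \ {∞}} (ord_w Z)² log[w,∞]_v ) = −2 (deg Z)² h_g(Z) + 2 Σ_{v ∈ M_k} N_v Σ_{w ∈ supp Z} (ord_w Z)² g_v(w). -/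
/-!
At each place `v` the identity holds up to two error terms. Write `q_j = c_j • ℓ(z_j)`, where `ℓ` is
the standard lift with one coordinate equal to `1` (`eq_scale_smul`). For distinct points,
`log[x,y]_v = log|ℓ(x) ∧ ℓ(y)|_v - log‖ℓ(x)‖_v - log‖ℓ(y)‖_v`, and `log[w,∞]_v = -log‖ℓ(w)‖_v` for
`w ≠ ∞`, so the second sum on the left is exactly what completes the diagonal: reorganizing the
double sum (`fekete_local`) leaves

  left = right + `log|Δ|_v` + `2 D log|∏ c_j|_v`,

where `Δ = ∏_{z_i ≠ z_j} (z_i - z_j)`, over pairs of finite zeros with multiplicity, is the reduced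
discriminant.

Both error terms come from `k \ {0}`. Up to sign, `∏ c_j` is the leading coefficient of `P(1,T)`
(`abv_leadingCoeff`). The element `Δ` is separable over `k`, being built from separable elements,
and is fixed by every automorphism of `K` over `k`, since these permute the roots of `P(1,T)` with
their multiplicities; hence it lies in `k` (`disc_mem`). By the product formula (`finsum_log`) the
error terms vanish after summation over `v`.

Splitting the sum over `v` requires each piece to have finite support. For the height this is
`finite_ne_one`: a nonzero `x : K` is a unit at almost every place, because at almost every place
the coefficients of the minimal polynomials of `x` and `x⁻¹` have absolute value at most `1`.
-/


open MvPolynomial Classical Finset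

noncomputable section

/-- A product formula field structure on `k`. -/
structure PlaceData (k : Type*) [Field k] where
  ι : Type
  N : ι → ℕ
  Npos : ∀ v, 0 < N v
  abv : ι → AbsoluteValue k ℝ
  nontrivial' : ∀ v, ∃ x : k, x ≠ 0 ∧ abv v x ≠ 1
  finiteSupport : ∀ x : k, x ≠ 0 → {v | abv v x ≠ 1}.Finite
  productFormula : ∀ x : k, x ≠ 0 → (∏ᶠ v, abv v x ^ N v) = 1

variable {k : Type*} [Field k] {K : Type*} [Field K]

/-- The standard lift of a point of `ℙ¹(K)` (coded in `Option K`, `none = ∞`) to `K²`. -/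
def ptLift (K : Type*) [Field K] : Option K → K × K :=
  fun o => o.elim ((0 : K), (1 : K)) (fun x => ((1 : K), x))

/-! ### The local computation -/

/-- The local rearrangement, for any pair potential `W - h - h - g - g` on a set with a distinguished
point `o` (the point `∞`) where `h` vanishes. The off-diagonal sum of a function of one point `z j`
produces the factor `card ι` minus the multiplicity of `z j`; the squared multiplicities of `h` then
cancel against the sum over `w ≠ o`, while those of `g` remain. -/
theorem fekete_local {α ι : Type*} [DecidableEq α] [Fintype ι] (z : ι → α) (o : α)
    (h g : α → ℝ) (ho : h o = 0) (W : α → α → ℝ) :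
    (∑ j : ι, ∑ i ∈ Finset.univ.filter fun i => z i ≠ z j,
        ((W (z i) (z j) - h (z i) - h (z j)) - g (z i) - g (z j)))
      + 2 * ∑ w ∈ (Finset.univ.image z).erase o,
          ((Finset.univ.filter fun j => z j = w).card : ℝ) ^ 2 * (-h w)
    = (∑ j : ι, ∑ i : ι, if z i = z j then 0 else W (z i) (z j))
      - 2 * (Fintype.card ι : ℝ) * ∑ j, h (z j)
      - 2 * (Fintype.card ι : ℝ) * ∑ j, g (z j)
      + 2 * ∑ w ∈ Finset.univ.image z,
          ((Finset.univ.filter fun j => z j = w).card : ℝ) ^ 2 * g w := by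
  set n : α → ℝ := fun w => ((Finset.univ.filter fun j => z j = w).card : ℝ) with hn
  have himg : ∀ F : α → ℝ, ∑ w ∈ Finset.univ.image z, n w ^ 2 * F w
      = ∑ j, n (z j) * F (z j) := by
    intro F
    rw [Finset.sum_comp (fun w => n w * F w) z]
    refine Finset.sum_congr rfl fun w _ => ?_
    rw [nsmul_eq_mul]; simp only [hn]; ring
  have hcard : ∀ j, (∑ i : ι, if z i = z j then (0 : ℝ) else 1) = Fintype.card ι - n (z j) := by
    intro j
    have : ∀ i, (if z i = z j then (0 : ℝ) else 1) = 1 - (if z i = z j then 1 else 0) := by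
      intro i; split_ifs <;> simp
    simp only [this, Finset.sum_sub_distrib, hn]
    simp
  have h1 : ∀ F : α → ℝ, (∑ j : ι, ∑ i : ι, if z i = z j then 0 else F (z j))
      = Fintype.card ι * ∑ j, F (z j) - ∑ j, n (z j) * F (z j) := by
    intro F
    rw [Finset.mul_sum, ← Finset.sum_sub_distrib]
    refine Finset.sum_congr rfl fun j _ => ?_
    rw [← sub_mul, ← hcard, Finset.sum_mul]
    refine Finset.sum_congr rfl fun i _ => ?_
    split_ifs <;> simp
  have h2 : ∀ F : α → ℝ, (∑ j : ι, ∑ i : ι, if z i = z j then 0 else F (z i))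
      = Fintype.card ι * ∑ j, F (z j) - ∑ j, n (z j) * F (z j) := by
    intro F
    rw [← h1, Finset.sum_comm]
    simp only [eq_comm]
  -- the term at `o` is zero, so it may be put back
  rw [Finset.sum_erase _ (by simp [ho])]
  rw [himg, himg]
  have key : (∑ j : ι, ∑ i ∈ Finset.univ.filter fun i => z i ≠ z j,
        ((W (z i) (z j) - h (z i) - h (z j)) - g (z i) - g (z j)))
      = (∑ j : ι, ∑ i : ι, if z i = z j then 0 else W (z i) (z j))
        - (∑ j : ι, ∑ i : ι, if z i = z j then 0 else h (z i))
        - (∑ j : ι, ∑ i : ι, if z i = z j then 0 else h (z j))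
        - (∑ j : ι, ∑ i : ι, if z i = z j then 0 else g (z i))
        - (∑ j : ι, ∑ i : ι, if z i = z j then 0 else g (z j)) := by
    simp only [← Finset.sum_sub_distrib, Finset.sum_filter]
    refine Finset.sum_congr rfl fun j _ => Finset.sum_congr rfl fun i _ => ?_
    by_cases hij : z i = z j <;> simp [hij]
  rw [key, h1, h1, h2, h2]
  simp only [mul_neg, Finset.sum_neg_distrib]
  ring

/-- A nonarchimedean absolute value is at most `1` on elements integral over its unit ball. -/
theorem le_one_of_isIntegral_coeff (a : AbsoluteValue K ℝ)
    (hna : ∀ x y : K, a (x + y) ≤ max (a x) (a y)) (p : Polynomial K) (hp : p.Monic)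
    (hc : ∀ i, a (p.coeff i) ≤ 1) (x : K) (hx : p.eval x = 0) : a x ≤ 1 := by
  by_contra! hlt
  have hn : p.natDegree ≠ 0 := by
    intro h
    rw [hp.natDegree_eq_zero.mp h] at hx
    simp at hx
  have hs : (Finset.range p.natDegree).Nonempty := by simpa using hn
  have hpow : x ^ p.natDegree = -∑ i ∈ Finset.range p.natDegree, p.coeff i * x ^ i := by
    rw [Polynomial.eval_eq_sum_range, Finset.sum_range_succ, hp.coeff_natDegree, one_mul] at hx
    linear_combination hx
  have h1 : a (∑ i ∈ Finset.range p.natDegree, p.coeff i * x ^ i) ≤ a x ^ (p.natDegree - 1) := by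
    refine (IsNonarchimedean.apply_sum_le_sup (f := a) hna hs).trans ?_
    refine Finset.sup'_le hs _ fun i hi => ?_
    rw [map_mul, map_pow]
    calc a (p.coeff i) * a x ^ i ≤ 1 * a x ^ i := by gcongr; exact hc i
      _ = a x ^ i := one_mul _
      _ ≤ _ := pow_le_pow_right₀ hlt.le (by have := Finset.mem_range.mp hi; omega)
  rw [← AbsoluteValue.map_neg, ← hpow, map_pow] at h1
  exact absurd h1 (not_le.mpr (pow_lt_pow_right₀ hlt (by omega)))

/-! ### Absolute values of algebraic elements and the product formula -/

section places

variable (pd : PlaceData k) [Algebra k K] (abvK : pd.ι → AbsoluteValue K ℝ)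

theorem finite_one_lt [Algebra.IsAlgebraic k K]
    (hext : ∀ v (x : k), abvK v (algebraMap k K x) = pd.abv v x)
    (nonarch : pd.ι → Prop) (harchfin : {v | ¬ nonarch v}.Finite)
    (hna : ∀ v, nonarch v → ∀ x y : K, abvK v (x + y) ≤ max (abvK v x) (abvK v y))
    (x : K) : {v | 1 < abvK v x}.Finite := by
  have hfin : (⋃ i ∈ (minpoly k x).support, {v | pd.abv v ((minpoly k x).coeff i) ≠ 1}).Finite :=
    (minpoly k x).support.finite_toSet.biUnion fun i hi =>
      pd.finiteSupport _ (Polynomial.mem_support_iff.mp hi)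
  refine (harchfin.union hfin).subset fun v hv => ?_
  by_contra hcon
  simp only [Set.mem_union, Set.mem_ofPred_eq, not_or, not_not, Set.mem_iUnion, not_exists] at hcon
  have hint : IsIntegral k x := Algebra.IsIntegral.isIntegral x
  refine absurd hv (not_lt.mpr (le_one_of_isIntegral_coeff (abvK v) (hna v hcon.1)
    ((minpoly k x).map (algebraMap k K)) ((minpoly.monic hint).map _) (fun i => ?_) x ?_))
  · rw [Polynomial.coeff_map, hext]
    by_cases hi : (minpoly k x).coeff i = 0
    · simp [hi]
    · exact (hcon.2 i (Polynomial.mem_support_iff.mpr hi)).le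
  · rw [Polynomial.eval_map_algebraMap, minpoly.aeval]

theorem finite_ne_one [Algebra.IsAlgebraic k K]
    (hext : ∀ v (x : k), abvK v (algebraMap k K x) = pd.abv v x)
    (nonarch : pd.ι → Prop) (harchfin : {v | ¬ nonarch v}.Finite)
    (hna : ∀ v, nonarch v → ∀ x y : K, abvK v (x + y) ≤ max (abvK v x) (abvK v y))
    (x : K) (hx : x ≠ 0) : {v | abvK v x ≠ 1}.Finite := by
  refine ((finite_one_lt pd abvK hext nonarch harchfin hna x).union
    (finite_one_lt pd abvK hext nonarch harchfin hna x⁻¹)).subset fun v hv => ?_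
  rcases lt_or_gt_of_ne hv with h | h
  · right
    simp only [Set.mem_ofPred_eq, map_inv₀]
    exact (one_lt_inv₀ ((abvK v).pos hx)).mpr h
  · left; exact h

end places

theorem finite_log (pd : PlaceData k) (x : k) (hx : x ≠ 0) :
    (Function.support fun v => (pd.N v : ℝ) * Real.log (pd.abv v x)).Finite := by
  refine (pd.finiteSupport x hx).subset fun v hv h => hv ?_
  simp [h]

/-- The product formula in logarithmic form. -/
theorem finsum_log (pd : PlaceData k) (x : k) (hx : x ≠ 0) :
    ∑ᶠ v, (pd.N v : ℝ) * Real.log (pd.abv v x) = 0 := by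
  have hf := pd.finiteSupport x hx
  have h := pd.productFormula x hx
  rw [finprod_eq_prod_of_mulSupport_subset (s := hf.toFinset) _ (by
    intro v hv
    simp only [Set.Finite.coe_toFinset, Set.mem_ofPred_eq]
    intro h1; exact hv (by simp [h1]))] at h
  rw [finsum_eq_sum_of_support_subset (s := hf.toFinset) _ (by
    intro v hv
    simp only [Set.Finite.coe_toFinset, Set.mem_ofPred_eq]
    intro h1; exact hv (by simp [h1]))]
  have h2 := congrArg Real.log h
  rw [Real.log_one, Real.log_prod fun v _ => pow_ne_zero _ ((pd.abv v).ne_zero hx)] at h2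
  simpa only [Real.log_pow] using h2

/-! ### The leading coefficient and the reduced discriminant -/

/-- The coordinate of `q` that is scaled to `1` in the standard lift of `[q.1 : q.2]`. -/
def scale (q : K × K) : K := if q.1 = 0 then q.2 else q.1

/-- The factor of the reduced discriminant attached to a pair of roots; equal roots are discarded by
giving them the factor `1`. -/
def discFactor (x y : K) : K := if x = y then 1 else x - y

/-- Galois descent in an algebraic closure of a possibly imperfect field: a separable element fixed
by all automorphisms has no conjugate other than itself, so it lies in the base field. -/
theorem mem_range_of_fixed [Algebra k K] [IsAlgClosure k K] (x : K) (hx : IsSeparable k x)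
    (hfix : ∀ σ : K ≃ₐ[k] K, σ x = x) : ∃ c : k, algebraMap k K c = x := by
  have : IsAlgClosed K := IsAlgClosure.isAlgClosed k
  have : Algebra.IsAlgebraic k K := IsAlgClosure.isAlgebraic
  have : Normal k K := IsAlgClosure.normal k K
  by_contra hcon
  have hbot : x ∉ (⊥ : Subalgebra k K) := fun h => hcon (Algebra.mem_bot.mp h)
  obtain ⟨y, hne, hconj⟩ := (notMem_iff_exists_ne_and_isConjRoot hx
    (IsAlgClosed.splits _)).mp hbot
  obtain ⟨σ, hσ⟩ := isConjRoot_iff_exists_algEquiv.mp hconj.symm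
  exact hne (by rw [← hσ, hfix])

/-- The reduced discriminant of `f`, a symmetric expression in the roots of `f`, lies in `k`. -/
theorem disc_mem [Algebra k K] [IsAlgClosure k K] (f : Polynomial k)
    (hsep : ∀ x ∈ (f.map (algebraMap k K)).roots, IsSeparable k x) :
    ∃ c : k, algebraMap k K c = ((f.map (algebraMap k K)).roots.map fun x =>
      ((f.map (algebraMap k K)).roots.map fun y => discFactor x y).prod).prod := by
  set R := (f.map (algebraMap k K)).roots with hR
  apply mem_range_of_fixed
  · rw [← mem_separableClosure_iff]
    refine multiset_prod_mem _ fun _ h => ?_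
    obtain ⟨x, hx, rfl⟩ := Multiset.mem_map.mp h
    refine multiset_prod_mem _ fun _ h => ?_
    obtain ⟨y, hy, rfl⟩ := Multiset.mem_map.mp h
    unfold discFactor
    split_ifs
    · exact one_mem _
    · exact sub_mem (mem_separableClosure_iff.mpr (hsep x hx))
        (mem_separableClosure_iff.mpr (hsep y hy))
  · intro σ
    -- `σ` fixes the coefficients of `f`, hence permutes its roots
    have hσ : R.map σ = R := by
      have hsp : (f.map (algebraMap k K)).Splits :=
        have : IsAlgClosed K := IsAlgClosure.isAlgClosed k
        IsAlgClosed.splits _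
      have h := hsp.roots_map (σ : K →+* K)
      rw [Polynomial.map_map] at h
      have hc : (σ : K →+* K).comp (algebraMap k K) = algebraMap k K := σ.toAlgHom.comp_algebraMap
      rw [hc] at h
      exact h.symm
    have hd : ∀ x y, σ (discFactor x y) = discFactor (σ x) (σ y) := by
      intro x y
      unfold discFactor
      simp only [EmbeddingLike.apply_eq_iff_eq]
      split_ifs <;> simp
    rw [map_multiset_prod, Multiset.map_map]
    simp only [Function.comp_def, map_multiset_prod, Multiset.map_map, hd]
    conv_rhs => rw [← hσ]
    simp only [Multiset.map_map, Function.comp_def]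

/-- The dehomogenization `P(1, T)`. -/
def dehom (P : MvPolynomial (Fin 2) k) : Polynomial k :=
  MvPolynomial.aeval ![1, Polynomial.X] P

theorem dehom_map [Algebra k K] (P : MvPolynomial (Fin 2) k) :
    (dehom P).map (algebraMap k K) = dehom (P.map (algebraMap k K)) := by
  unfold dehom
  induction P using MvPolynomial.induction_on with
  | C a => simp
  | add p q hp hq => simp [hp, hq]
  | mul_X p i hp =>
    simp only [map_mul, Polynomial.map_mul, hp, MvPolynomial.map_X, MvPolynomial.aeval_X]
    fin_cases i <;> simp

theorem dehom_prod {D : ℕ} (q : Fin D → K × K) :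
    dehom (∏ j : Fin D, (X 0 * C (q j).2 - X 1 * C (q j).1))
      = ∏ j, (Polynomial.C (q j).2 - Polynomial.X * Polynomial.C (q j).1) := by
  unfold dehom
  simp [map_prod]

theorem factor_ne_zero (q : K × K) (hq : q ≠ 0) :
    Polynomial.C q.2 - Polynomial.X * Polynomial.C q.1 ≠ 0 := by
  intro h
  apply hq
  have h0 := congrArg (Polynomial.coeff · 0) h
  have h1 := congrArg (Polynomial.coeff · 1) h
  simp [Polynomial.coeff_C] at h0 h1
  exact Prod.ext h1 h0

theorem leadingCoeff_factor (q : K × K) :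
    (Polynomial.C q.2 - Polynomial.X * Polynomial.C q.1).leadingCoeff = scale q ∨
    (Polynomial.C q.2 - Polynomial.X * Polynomial.C q.1).leadingCoeff = -scale q := by
  unfold scale
  split_ifs with h
  · left; simp [h]
  · right
    have : Polynomial.C q.2 - Polynomial.X * Polynomial.C q.1
        = Polynomial.C (-q.1) * Polynomial.X + Polynomial.C q.2 := by
      rw [Polynomial.C_neg]; ring
    rw [this, Polynomial.leadingCoeff_linear (neg_ne_zero.mpr h)]

/-- The point of `ℙ¹(K)` with homogeneous coordinates `q`. -/
def toPt (q : K × K) : Option K := if q.1 = 0 then none else some (q.2 / q.1)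

theorem roots_factor (q : K × K) :
    (Polynomial.C q.2 - Polynomial.X * Polynomial.C q.1).roots
      = (toPt q).elim 0 fun x => {x} := by
  unfold toPt
  split_ifs with h
  · simp [h]
  · have : Polynomial.C q.2 - Polynomial.X * Polynomial.C q.1
        = Polynomial.C (-q.1) * (Polynomial.X - Polynomial.C (q.2 / q.1)) := by
      rw [mul_sub, ← Polynomial.C_mul, neg_mul, mul_div_cancel₀ _ h, Polynomial.C_neg,
        Polynomial.C_neg]; ring
    rw [this, Polynomial.roots_C_mul _ (neg_ne_zero.mpr h), Polynomial.roots_X_sub_C]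
    rfl

/-- The roots of `P(1, T)` are the finite zeros of `P`, with multiplicity. -/
theorem roots_dehom_prod {D : ℕ} (q : Fin D → K × K) (hq : ∀ j, q j ≠ 0) :
    (∏ j, (Polynomial.C (q j).2 - Polynomial.X * Polynomial.C (q j).1)).roots
      = ∑ j, (toPt (q j)).elim 0 fun x => {x} := by
  rw [Polynomial.roots_prod _ _ (Finset.prod_ne_zero_iff.mpr fun j _ => factor_ne_zero _ (hq j))]
  simp only [roots_factor]
  rfl

/-- A product over the multiset of finite points of `z` is a product over all of `z` in which `∞`
contributes `1`. -/
theorem sum_elim_map_prod {D : ℕ} (z : Fin D → Option K) (F : K → K) :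
    ((∑ j, (z j).elim (0 : Multiset K) fun x => {x}).map F).prod
      = ∏ j, (z j).elim 1 F := by
  have h := map_sum (Multiset.mapAddMonoidHom F) (fun j => (z j).elim (0 : Multiset K) fun x => {x})
    Finset.univ
  rw [Multiset.coe_mapAddMonoidHom] at h
  rw [h, Multiset.prod_sum]
  refine Finset.prod_congr rfl fun j _ => ?_
  cases z j <;> simp


/-- `discFactor` extended to `ℙ¹(K)` by the value `1` at pairs involving `∞`. -/
def discPt (x y : Option K) : K := x.elim 1 fun a => y.elim 1 fun b => discFactor a b

theorem prod_discPt {D : ℕ} (z : Fin D → Option K) :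
    (((∑ j, (z j).elim (0 : Multiset K) fun x => {x}).map fun x =>
      ((∑ j, (z j).elim (0 : Multiset K) fun x => {x}).map fun y => discFactor x y).prod).prod)
      = ∏ i, ∏ j, discPt (z i) (z j) := by
  rw [sum_elim_map_prod]
  refine Finset.prod_congr rfl fun i _ => ?_
  cases h : z i with
  | none => simp [discPt]
  | some x =>
    simp only [Option.elim_some, discPt]
    exact sum_elim_map_prod z _

theorem discPt_ne_zero (x y : Option K) : discPt x y ≠ 0 := by
  cases x <;> cases y <;> simp [discPt, discFactor]
  split_ifs with h
  · exact one_ne_zero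
  · exact sub_ne_zero.mpr h

/-- Pairs involving `∞` contribute nothing on either side: the wedge of `(0, 1)` with `(1, x)` is
`±1`. -/
theorem log_discPt (a : AbsoluteValue K ℝ) (x y : Option K) :
    Real.log (a (discPt x y)) = if x = y then 0 else
      Real.log (a ((ptLift K x).1 * (ptLift K y).2 - (ptLift K x).2 * (ptLift K y).1)) := by
  cases x <;> cases y <;> simp [discPt, discFactor, ptLift]
  rename_i x y
  split_ifs with h
  · simp
  · rw [a.map_sub]

/-! ### Standard lifts -/

/-- Distinct points of `ℙ¹(K)` have linearly independent lifts. -/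
theorem wedge_ne_zero (x y : Option K) (h : x ≠ y) :
    (ptLift K x).1 * (ptLift K y).2 - (ptLift K x).2 * (ptLift K y).1 ≠ 0 := by
  cases x <;> cases y <;> simp [ptLift] at h ⊢
  exact sub_ne_zero.mpr (Ne.symm h)

theorem eq_scale_smul (q : K × K) : q = scale q • ptLift K (toPt q) := by
  unfold scale toPt
  split_ifs with h
  · ext <;> simp [ptLift, h]
  · ext <;> simp [ptLift, mul_div_cancel₀ _ h]

theorem scale_ne_zero (q : K × K) (hq : q ≠ 0) : scale q ≠ 0 := by
  unfold scale
  split_ifs with h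
  · exact fun h2 => hq (Prod.ext h h2)
  · exact h

/-- The leading coefficient of `P(1, T)` is, up to sign, the product of the scaling factors. -/
theorem abv_leadingCoeff {D : ℕ} (a : AbsoluteValue K ℝ) (q : Fin D → K × K) :
    a (∏ j, (Polynomial.C (q j).2 - Polynomial.X * Polynomial.C (q j).1)).leadingCoeff
      = ∏ j, a (scale (q j)) := by
  rw [Polynomial.leadingCoeff_prod, map_prod]
  refine Finset.prod_congr rfl fun j _ => ?_
  rcases leadingCoeff_factor (q j) with h | h <;> rw [h]
  exact a.map_neg _

/-! ### The global identity -/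

/-- global computation of Fekete sums.  Let `k` be a product formula
field, `g = {g_v}` an adelic normalized weight (restricted here to the classical points
`ℙ¹(K)`, `K` an algebraic closure of `k`; the family vanishes off finitely many places),
and `Z` a `k`-algebraic zeros divisor on `ℙ¹(k_s)` (all finite points of `supp Z` are
separable over `k`), represented by a homogeneous `P` of degree `D ≥ 1` with factorization
`(q_j)` and zeros `z_j = π(q_j)` (coded in `Option K`).  Then
`Σ_v N_v ( (Z,Z)_{g_v} + 2 Σ_{w ∈ supp Z \ {∞}} (ord_w Z)² log[w,∞]_v )
  = −2 (deg Z)² h_g(Z) + 2 Σ_v N_v Σ_{w ∈ supp Z} (ord_w Z)² g_v(w)`,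
where `(Z,Z)_{g_v} = Σ_j Σ_{i : z_i ≠ z_j} (log[z_i,z_j]_v − g_v(z_i) − g_v(z_j))`,
`[·,·]_v` is the chordal metric at `v` and
`h_g(Z) = Σ_v N_v (Σ_j g_v(z_j) + Σ_j log‖q_j‖_v)/D` is the `g`-height. -/
theorem stmt19 (pd : PlaceData k)
    [Algebra k K] [IsAlgClosure k K]
    (abvK : pd.ι → AbsoluteValue K ℝ)
    (hext : ∀ v (x : k), abvK v (algebraMap k K x) = pd.abv v x)
    (nonarch : pd.ι → Prop)
    (harchfin : {v | ¬ nonarch v}.Finite)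
    (hna : ∀ v, nonarch v → ∀ x y : K, abvK v (x + y) ≤ max (abvK v x) (abvK v y))
    (nrm : pd.ι → K × K → ℝ)
    (hnrm : ∀ v p, nrm v p =
      if nonarch v then max (abvK v p.1) (abvK v p.2)
      else Real.sqrt (abvK v p.1 ^ 2 + abvK v p.2 ^ 2))
    -- the chordal metric at each place, on points of `ℙ¹(K)` coded in `Option K`
    (chord : pd.ι → Option K → Option K → ℝ)
    (hchord : ∀ v x y, chord v x y =
      abvK v ((ptLift K x).1 * (ptLift K y).2 - (ptLift K x).2 * (ptLift K y).1) /
        (nrm v (ptLift K x) * nrm v (ptLift K y)))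
    -- the adelic normalized weight, restricted to classical points
    (g : pd.ι → Option K → ℝ)
    (hEg : {v | g v ≠ 0}.Finite)
    -- the algebraic zeros divisor `Z` on `ℙ¹(k_s)`
    (D : ℕ) (hD : 1 ≤ D)
    (P : MvPolynomial (Fin 2) k) (hP : P ≠ 0) (hhom : P.IsHomogeneous D)
    (q : Fin D → K × K) (hq : ∀ j, q j ≠ 0)
    (hfact : P.map (algebraMap k K) =
      ∏ j : Fin D, (X 0 * C (q j).2 - X 1 * C (q j).1))
    (zpt : Fin D → Option K)
    (hzpt : ∀ j, zpt j = if (q j).1 = 0 then none else some ((q j).2 / (q j).1))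
    (hsep : ∀ j (x : K), zpt j = some x → IsSeparable k x) :
    (∑ᶠ v, (pd.N v : ℝ) *
        ((∑ j : Fin D, ∑ i ∈ Finset.univ.filter fun i => zpt i ≠ zpt j,
            (Real.log (chord v (zpt i) (zpt j)) - g v (zpt i) - g v (zpt j)))
          + 2 * ∑ w ∈ (Finset.univ.image zpt).erase none,
              ((Finset.univ.filter fun j => zpt j = w).card : ℝ) ^ 2 *
                Real.log (chord v w none)))
      = -2 * (D : ℝ) ^ 2 *
          (∑ᶠ v, (pd.N v : ℝ) *
            (((∑ j : Fin D, g v (zpt j)) + ∑ j : Fin D, Real.log (nrm v (q j))) / D))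
        + 2 * ∑ᶠ v, (pd.N v : ℝ) *
            ∑ w ∈ Finset.univ.image zpt,
              ((Finset.univ.filter fun j => zpt j = w).card : ℝ) ^ 2 * g v w := by
  have : IsAlgClosed K := IsAlgClosure.isAlgClosed k
  have : Algebra.IsAlgebraic k K := IsAlgClosure.isAlgebraic
  have hz : ∀ j, zpt j = toPt (q j) := hzpt
  have hD0 : (D : ℝ) ≠ 0 := by exact_mod_cast (by omega : D ≠ 0)
  have hfin := finite_ne_one pd abvK hext nonarch harchfin hna
  -- positivity, homogeneity and normalization of the local norms
  have hpos : ∀ v w, 0 < nrm v (ptLift K w) := by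
    intro v w
    rw [hnrm]
    cases w <;> simp only [ptLift, Option.elim_none, Option.elim_some, map_one, map_zero] <;>
      split_ifs
    · exact lt_max_of_lt_right one_pos
    · positivity
    · exact lt_max_of_lt_left one_pos
    · positivity
  have hsmul : ∀ v (c : K) p, nrm v (c • p) = abvK v c * nrm v p := by
    intro v c p
    rw [hnrm, hnrm]
    split_ifs
    · simp only [Prod.smul_fst, Prod.smul_snd, smul_eq_mul, map_mul]
      rw [mul_max_of_nonneg _ _ ((abvK v).nonneg c)]
    · simp only [Prod.smul_fst, Prod.smul_snd, smul_eq_mul, map_mul]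
      rw [mul_pow, mul_pow, ← mul_add, Real.sqrt_mul (sq_nonneg _),
        Real.sqrt_sq ((abvK v).nonneg c)]
  have hinf : ∀ v, nrm v (ptLift K none) = 1 := by
    intro v
    rw [hnrm]
    simp [ptLift]
  have hlogq : ∀ v j, Real.log (nrm v (q j))
      = Real.log (abvK v (scale (q j))) + Real.log (nrm v (ptLift K (zpt j))) := by
    intro v j
    conv_lhs => rw [eq_scale_smul (q j), hsmul, ← hz]
    exact Real.log_mul ((abvK v).ne_zero (scale_ne_zero _ (hq j))) (hpos v _).ne'
  have hlogc : ∀ v x y, x ≠ y → Real.log (chord v x y)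
      = Real.log (abvK v ((ptLift K x).1 * (ptLift K y).2 - (ptLift K x).2 * (ptLift K y).1))
        - Real.log (nrm v (ptLift K x)) - Real.log (nrm v (ptLift K y)) := by
    intro v x y h
    rw [hchord, Real.log_div ((abvK v).ne_zero (wedge_ne_zero x y h))
      (mul_pos (hpos v x) (hpos v y)).ne', Real.log_mul (hpos v x).ne' (hpos v y).ne']
    ring
  -- the leading coefficient and the reduced discriminant are nonzero elements of `k`
  have hf : (dehom P).map (algebraMap k K)
      = ∏ j, (Polynomial.C (q j).2 - Polynomial.X * Polynomial.C (q j).1) := by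
    rw [dehom_map, hfact, dehom_prod]
  have hroots : ((dehom P).map (algebraMap k K)).roots
      = ∑ j, (zpt j).elim 0 fun x => {x} := by
    rw [hf, roots_dehom_prod q hq]; simp only [hz]
  obtain ⟨Δ, hΔ⟩ := disc_mem (K := K) (dehom P) (by
    intro x hx
    rw [hroots] at hx
    obtain ⟨j, _, hj⟩ := Multiset.mem_sum.mp hx
    cases h : zpt j with
    | none => simp [h] at hj
    | some y =>
      rw [h] at hj
      obtain rfl : x = y := by simpa using hj
      exact hsep j x h)
  rw [hroots, prod_discPt] at hΔ
  have hΔ0 : Δ ≠ 0 := by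
    rintro rfl
    rw [map_zero] at hΔ
    exact Finset.prod_ne_zero_iff.mpr (fun i _ => Finset.prod_ne_zero_iff.mpr fun j _ =>
      discPt_ne_zero (zpt i) (zpt j)) hΔ.symm
  have hlogΔ : ∀ v, Real.log (pd.abv v Δ) = ∑ j, ∑ i, if zpt i = zpt j then 0 else
      Real.log (abvK v ((ptLift K (zpt i)).1 * (ptLift K (zpt j)).2
        - (ptLift K (zpt i)).2 * (ptLift K (zpt j)).1)) := by
    intro v
    rw [← hext, hΔ, Finset.prod_comm, map_prod, Real.log_prod fun j _ => by
      rw [map_prod]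
      exact Finset.prod_ne_zero_iff.mpr fun i _ => (abvK v).ne_zero (discPt_ne_zero _ _)]
    refine Finset.sum_congr rfl fun j _ => ?_
    rw [map_prod, Real.log_prod fun i _ => (abvK v).ne_zero (discPt_ne_zero _ _)]
    exact Finset.sum_congr rfl fun i _ => log_discPt _ _ _
  have hL : ∀ v, pd.abv v (dehom P).leadingCoeff = ∏ j, abvK v (scale (q j)) := by
    intro v
    rw [← hext, ← Polynomial.leadingCoeff_map, hf, abv_leadingCoeff]
  have hL0 : (dehom P).leadingCoeff ≠ 0 := by
    intro h0
    have hne : (dehom P).map (algebraMap k K) ≠ 0 := by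
      rw [hf]
      exact Finset.prod_ne_zero_iff.mpr fun j _ => factor_ne_zero _ (hq j)
    apply hne
    rw [Polynomial.leadingCoeff_eq_zero.mp h0, Polynomial.map_zero]
  have hlogL : ∀ v, Real.log (pd.abv v (dehom P).leadingCoeff)
      = ∑ j, Real.log (abvK v (scale (q j))) := by
    intro v
    rw [hL, Real.log_prod fun j _ => (abvK v).ne_zero (scale_ne_zero _ (hq j))]
  have hlocal : ∀ v, (pd.N v : ℝ) *
        ((∑ j : Fin D, ∑ i ∈ Finset.univ.filter fun i => zpt i ≠ zpt j,
            (Real.log (chord v (zpt i) (zpt j)) - g v (zpt i) - g v (zpt j)))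
          + 2 * ∑ w ∈ (Finset.univ.image zpt).erase none,
              ((Finset.univ.filter fun j => zpt j = w).card : ℝ) ^ 2 *
                Real.log (chord v w none))
      = ((-2 * (D : ℝ) ^ 2) * ((pd.N v : ℝ) *
            (((∑ j : Fin D, g v (zpt j)) + ∑ j : Fin D, Real.log (nrm v (q j))) / D))
        + 2 * ((pd.N v : ℝ) *
            ∑ w ∈ Finset.univ.image zpt,
              ((Finset.univ.filter fun j => zpt j = w).card : ℝ) ^ 2 * g v w))
        + ((pd.N v : ℝ) * Real.log (pd.abv v Δ)
          + (2 * D) * ((pd.N v : ℝ) * Real.log (pd.abv v (dehom P).leadingCoeff))) := by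
    intro v
    have h := fekete_local zpt none (fun w => Real.log (nrm v (ptLift K w))) (g v)
      (by simp [hinf]) (fun x y => Real.log (abvK v ((ptLift K x).1 * (ptLift K y).2
        - (ptLift K x).2 * (ptLift K y).1)))
    have e1 : (∑ j : Fin D, ∑ i ∈ Finset.univ.filter fun i => zpt i ≠ zpt j,
            (Real.log (chord v (zpt i) (zpt j)) - g v (zpt i) - g v (zpt j)))
        = ∑ j : Fin D, ∑ i ∈ Finset.univ.filter fun i => zpt i ≠ zpt j,
            ((Real.log (abvK v ((ptLift K (zpt i)).1 * (ptLift K (zpt j)).2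
              - (ptLift K (zpt i)).2 * (ptLift K (zpt j)).1))
              - Real.log (nrm v (ptLift K (zpt i))) - Real.log (nrm v (ptLift K (zpt j))))
              - g v (zpt i) - g v (zpt j)) := by
      refine Finset.sum_congr rfl fun j _ => Finset.sum_congr rfl fun i hi => ?_
      rw [hlogc v _ _ (Finset.mem_filter.mp hi).2]
    have e2 : ∑ w ∈ (Finset.univ.image zpt).erase none,
              ((Finset.univ.filter fun j => zpt j = w).card : ℝ) ^ 2 *
                Real.log (chord v w none)
        = ∑ w ∈ (Finset.univ.image zpt).erase none,
              ((Finset.univ.filter fun j => zpt j = w).card : ℝ) ^ 2 *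
                (-Real.log (nrm v (ptLift K w))) := by
      refine Finset.sum_congr rfl fun w hw => ?_
      have hw' : w ≠ none := Finset.ne_of_mem_erase hw
      rw [hlogc v _ _ hw', hinf]
      cases w with
      | none => exact absurd rfl hw'
      | some x => simp [ptLift]
    have e3 : (-2 * (D : ℝ) ^ 2) * ((pd.N v : ℝ) *
            (((∑ j : Fin D, g v (zpt j)) + ∑ j : Fin D, Real.log (nrm v (q j))) / D))
        = pd.N v * (-2 * D * ((∑ j : Fin D, g v (zpt j)) + ∑ j : Fin D, Real.log (nrm v (q j)))) := by
      field_simp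
    rw [e3, e1, e2]
    simp only [Fintype.card_fin] at h
    rw [hlogΔ, hlogL]
    simp only [hlogq, Finset.sum_add_distrib]
    linear_combination (pd.N v : ℝ) * h
  -- at almost every place `v` is nonarchimedean, `g v = 0`, and the nonzero coordinates of each
  -- `q j` are units, so that `‖q j‖ = 1`
  have hs1 : (Function.support fun v => (pd.N v : ℝ) *
      (((∑ j : Fin D, g v (zpt j)) + ∑ j : Fin D, Real.log (nrm v (q j))) / D)).Finite := by
    have hcoord : ∀ x : K, {v | x ≠ 0 ∧ abvK v x ≠ 1}.Finite := fun x => by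
      by_cases hx : x = 0
      · simp [hx]
      · exact (hfin x hx).subset fun v hv => hv.2
    refine ((hEg.union harchfin).union (Set.finite_iUnion fun j =>
      (hcoord (q j).1).union (hcoord (q j).2))).subset fun v hv => ?_
    by_contra hcon
    simp only [Set.mem_union, Set.mem_ofPred_eq, Set.mem_iUnion, not_or, not_not, not_exists,
      not_and] at hcon
    obtain ⟨⟨hg0, hv0⟩, hc⟩ := hcon
    refine hv ?_
    have hn1 : ∀ j, nrm v (q j) = 1 := by
      intro j
      rw [hnrm, if_pos hv0]
      by_cases h1 : (q j).1 = 0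
      · have h2 : (q j).2 ≠ 0 := fun h2 => hq j (Prod.ext h1 h2)
        simp [h1, (hc j).2 h2]
      · by_cases h2 : (q j).2 = 0
        · simp [h2, (hc j).1 h1]
        · simp [(hc j).1 h1, (hc j).2 h2]
    simp [hg0, hn1]
  have hs2 : (Function.support fun v => (pd.N v : ℝ) *
      ∑ w ∈ Finset.univ.image zpt,
        ((Finset.univ.filter fun j => zpt j = w).card : ℝ) ^ 2 * g v w).Finite := by
    refine hEg.subset fun v hv h => hv ?_
    simp [h]
  have hsupp : ∀ (c : ℝ) {F : pd.ι → ℝ}, (Function.support F).Finite →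
      (Function.support fun v => c * F v).Finite := fun c F hF =>
    hF.subset fun v hv h => hv (by simp [h])
  have hadd : ∀ {F G : pd.ι → ℝ}, (Function.support F).Finite → (Function.support G).Finite →
      (Function.support fun v => F v + G v).Finite := fun hF hG =>
    (hF.union hG).subset (Function.support_add _ _)
  have hs3 := finite_log pd Δ hΔ0
  have hs4 := finite_log pd _ hL0
  rw [finsum_congr hlocal,
    finsum_add_distrib (hadd (hsupp _ hs1) (hsupp _ hs2)) (hadd hs3 (hsupp _ hs4)),
    finsum_add_distrib (hsupp _ hs1) (hsupp _ hs2), finsum_add_distrib hs3 (hsupp _ hs4),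
    ← mul_finsum, ← mul_finsum, ← mul_finsum,
    finsum_log pd Δ hΔ0, finsum_log pd _ hL0]
  ring

end
end
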